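/- Let α ∈ (0,1] and let A ⊆ F_2^n satisfy |A| ≥ α·2^n. Then for every real ε > 0, every positive integer t, and every nonempty set B ⊆ F_2^n there exists a linear subspace V of F_2^n with codimension codim(V) = n − dim(V) ≤ 32·log(2/α^t) such that: for every v ∈ V, every nonempty subset S ⊆ F_2^n, every real η > 0, and every positive integer ℓ, Pr_{y∈S}[ ρ_{A→B}(y) − ρ_{A→B}(y + v) ≤ 4εℓ·√(ρ_{A→B}(y)) + 2η + 2^{−ℓ}·√(|B|/|A|) ] ≥ 1 − 16·(ℓ/η)·(|A+B|/|S|)·exp(−ε²t/4). -/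

import Mathlib

open scoped Classical Pointwise

/-- The measure of additive containment: `ρ_{A→B}(y) = |{a ∈ A : y + a ∈ B}| / |A|`. -/
noncomputable def rhoMeas {n : ℕ} (A B : Finset (Fin n → ZMod 2)) (y : Fin n → ZMod 2) : ℝ :=
  ((A.filter fun a => y + a ∈ B).card : ℝ) / A.card

/-- `Pr_{y ∈ S}[P y] = |{y ∈ S : P y}| / |S|`. -/
noncomputable def prOver {n : ℕ} (S : Finset (Fin n → ZMod 2))
    (P : (Fin n → ZMod 2) → Prop) : ℝ :=
  ((S.filter fun y => P y).card : ℝ) / S.card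

lemma chainR (s0 s1 s2 a b : ℝ) (h0 : 0 ≤ s0) (h1 : 0 ≤ s1) (h2 : 0 ≤ s2) (ha : 0 ≤ a)
    (hb : 0 ≤ b) (h01 : s0 - a * √s0 ≤ s1) (h12 : s1 - b * √s1 ≤ s2) :
    s0 - (a + b) * √s0 ≤ s2 := by
  have q0 := Real.mul_self_sqrt h0
  have q1 := Real.mul_self_sqrt h1
  have p0 := Real.sqrt_nonneg s0
  have p1 := Real.sqrt_nonneg s1
  rcases le_total s1 s0 with h | h
  · have := Real.sqrt_le_sqrt h
    nlinarith
  · have := Real.sqrt_le_sqrt h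
    rcases le_total b (√s0) with hc | hc
    · nlinarith [mul_nonneg (sub_nonneg.2 this) (sub_nonneg.2 hc), mul_nonneg ha p0]
    · nlinarith [mul_nonneg ha p0]

lemma exp_aux (x : ℝ) (h0 : 0 ≤ x) (h1 : x ≤ 1) : Real.exp x * (1 - x) ≤ 1 - x ^ 2 / 2 := by
  have h := Real.exp_bound' h0 h1 (n := 3) (by norm_num)
  norm_num [Finset.sum_range_succ, Nat.factorial] at h
  have : Real.exp x * (1 - x) ≤ (1 + x + x ^ 2 / 2 + x ^ 3 * (2 / 9)) * (1 - x) := by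
    apply mul_le_mul_of_nonneg_right _ (by linarith)
    linarith
  nlinarith [pow_nonneg h0 3, pow_nonneg h0 4]

lemma exp_neg_aux (x : ℝ) (h0 : 0 ≤ x) : Real.exp (-x) ≤ 1 - x + x ^ 2 / 2 := by
  have h := Real.quadratic_le_exp_of_nonneg h0
  rw [Real.exp_neg]
  have hp : 0 < 1 + x + x ^ 2 / 2 := by positivity
  calc (Real.exp x)⁻¹ ≤ (1 + x + x ^ 2 / 2)⁻¹ := inv_anti₀ hp h
    _ ≤ _ := by
      rw [inv_le_iff_one_le_mul₀ hp]
      nlinarith [pow_nonneg h0 4]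

lemma finalR {ι : Type*} (Ω : Finset ι) (hΩ : Ω.Nonempty) (f g : ι → ℝ) (s0 s1 c η τ : ℝ)
    (hf0 : ∀ w, 0 ≤ f w) (hg0 : ∀ w, 0 ≤ g w) (hg1 : ∀ w, g w ≤ 1)
    (hs0 : 0 ≤ s0) (hs01 : s0 ≤ 1) (hs1 : 0 ≤ s1) (hc : 0 ≤ c) (hη : 0 ≤ η) (hτ : 0 ≤ τ)
    (hP : ((Ω.filter fun w => f w < s0 - c * √s0).card : ℝ) ≤ η * Ω.card)
    (hQ : ((Ω.filter fun w => s1 < g w - c * √(g w)).card : ℝ) ≤ η * Ω.card)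
    (hd : ∑ w ∈ Ω, f w - ∑ w ∈ Ω, g w ≤ τ * Ω.card) :
    s0 - s1 ≤ 2 * c * √s0 + 2 * η + τ := by
  have hN : (0 : ℝ) < Ω.card := by exact_mod_cast hΩ.card_pos
  have q0 := Real.mul_self_sqrt hs0
  have p0 := Real.sqrt_nonneg s0
  rcases le_total (√s0) c with h | h
  · nlinarith
  have e1 : Ω.card * (s0 - c * √s0) - η * Ω.card ≤ ∑ w ∈ Ω, f w := by
    have : ∑ w ∈ Ω, ((s0 - c * √s0) - (if f w < s0 - c * √s0 then 1 else 0)) ≤ ∑ w ∈ Ω, f w := by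
      apply Finset.sum_le_sum
      intro w _
      split_ifs with hw
      · nlinarith [hf0 w]
      · linarith
    rw [Finset.sum_sub_distrib, Finset.sum_const, Finset.sum_boole, nsmul_eq_mul] at this
    linarith
  have e2 : ∑ w ∈ Ω, g w - c * ∑ w ∈ Ω, √(g w) - η * Ω.card ≤ Ω.card * s1 := by
    have : ∑ w ∈ Ω, (g w - c * √(g w) - (if s1 < g w - c * √(g w) then 1 else 0))
        ≤ ∑ w ∈ Ω, s1 := by
      apply Finset.sum_le_sum
      intro w _
      split_ifs with hw
      · nlinarith [hg0 w, hg1 w, Real.sqrt_nonneg (g w), mul_nonneg hc (Real.sqrt_nonneg (g w))]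
      · linarith
    rw [Finset.sum_sub_distrib, Finset.sum_sub_distrib, Finset.sum_const, Finset.sum_boole,
      nsmul_eq_mul, ← Finset.mul_sum] at this
    linarith
  obtain ⟨m, hm⟩ : ∃ m, m = (∑ w ∈ Ω, g w) / Ω.card := ⟨_, rfl⟩
  have hm0 : 0 ≤ m := hm ▸ div_nonneg (Finset.sum_nonneg fun w _ => hg0 w) hN.le
  have hmN : ∑ w ∈ Ω, g w = Ω.card * m := by
    rw [hm, mul_div_cancel₀ _ hN.ne']
  have e3 : ∑ w ∈ Ω, √(g w) ≤ Ω.card * √m := by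
    have h1 : (∑ w ∈ Ω, √(g w)) ^ 2 ≤ (Ω.card * √m) ^ 2 := by
      have := sq_sum_le_card_mul_sum_sq (s := Ω) (f := fun w => √(g w))
      simp only [Real.sq_sqrt (hg0 _)] at this
      rw [mul_pow, Real.sq_sqrt hm0]
      rw [hmN] at this
      nlinarith
    exact (sq_le_sq₀ (Finset.sum_nonneg fun w _ => Real.sqrt_nonneg _)
      (mul_nonneg hN.le (Real.sqrt_nonneg _))).1 h1
  have e4 : m - c * √m - η ≤ s1 := by
    have : Ω.card * (m - c * √m - η) ≤ Ω.card * s1 := by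
      have := mul_le_mul_of_nonneg_left e3 hc
      rw [hmN] at e2
      nlinarith
    exact le_of_mul_le_mul_left this hN
  have e5 : s0 - c * √s0 - η - τ ≤ m := by
    have : Ω.card * (s0 - c * √s0 - η - τ) ≤ Ω.card * m := by
      rw [hmN] at hd
      nlinarith
    exact le_of_mul_le_mul_left this hN
  have q1 := Real.mul_self_sqrt hm0
  rcases le_total m s0 with h' | h'
  · have := Real.sqrt_le_sqrt h'
    nlinarith
  · have := Real.sqrt_le_sqrt h'
    nlinarith [mul_nonneg (sub_nonneg.2 this) (sub_nonneg.2 h), mul_nonneg hc p0]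

noncomputable def chi {n : ℕ} (ξ x : Fin n → ZMod 2) : ℝ := if ξ ⬝ᵥ x = 0 then 1 else -1

lemma zmod2_cases (a : ZMod 2) : a = 0 ∨ a = 1 := by revert a; decide

lemma chi_add {n : ℕ} (ξ x y : Fin n → ZMod 2) : chi ξ (x + y) = chi ξ x * chi ξ y := by
  unfold chi
  rw [dotProduct_add]
  have h11 : (1 : ZMod 2) + 1 = 0 := by decide
  rcases zmod2_cases (ξ ⬝ᵥ x) with h | h <;> rcases zmod2_cases (ξ ⬝ᵥ y) with h' | h' <;>
    simp [h, h', h11]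

lemma chi_comm {n : ℕ} (ξ x : Fin n → ZMod 2) : chi ξ x = chi x ξ := by
  unfold chi; rw [dotProduct_comm]

lemma chi_zero {n : ℕ} (ξ : Fin n → ZMod 2) : chi ξ 0 = 1 := by simp [chi]

lemma chi_sum {n : ℕ} {ι : Type*} (ξ : Fin n → ZMod 2) (s : Finset ι) (f : ι → Fin n → ZMod 2) :
    chi ξ (∑ i ∈ s, f i) = ∏ i ∈ s, chi ξ (f i) := by
  induction s using Finset.induction_on with
  | empty => simp [chi_zero]
  | insert a s ha ih => rw [Finset.sum_insert ha, Finset.prod_insert ha, chi_add, ih]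

lemma chi_abs {n : ℕ} (ξ x : Fin n → ZMod 2) : |chi ξ x| = 1 := by
  unfold chi; split_ifs <;> simp

lemma chi_cases {n : ℕ} (ξ x : Fin n → ZMod 2) : chi ξ x = 1 ∨ chi ξ x = -1 := by
  unfold chi; split_ifs <;> simp

lemma cardG (n : ℕ) : (Fintype.card (Fin n → ZMod 2) : ℝ) = 2 ^ n := by
  simp [ZMod.card]

lemma sum_chi {n : ℕ} (ξ : Fin n → ZMod 2) :
    ∑ x, chi ξ x = if ξ = 0 then (2 : ℝ) ^ n else 0 := by
  split_ifs with h
  · subst h; simp [chi, ZMod.card]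
  · have : ∃ x0, chi ξ x0 = -1 := by
      obtain ⟨i, hi⟩ := Function.ne_iff.1 h
      refine ⟨Pi.single i 1, ?_⟩
      unfold chi
      rw [dotProduct_single, mul_one]
      exact if_neg hi
    obtain ⟨x0, hx0⟩ := this
    have h1 := Equiv.sum_comp (Equiv.addRight x0) (fun x => chi ξ x)
    simp only [Equiv.coe_addRight, chi_add, hx0, mul_neg, mul_one, Finset.sum_neg_distrib] at h1
    linarith

noncomputable def hat {n : ℕ} (A : Finset (Fin n → ZMod 2)) (ξ : Fin n → ZMod 2) : ℝ :=
  ∑ a ∈ A, chi ξ a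

lemma add_self2 {n : ℕ} (x : Fin n → ZMod 2) : x + x = 0 := by
  ext i; simp only [Pi.add_apply, Pi.zero_apply]; generalize x i = a; revert a; decide

lemma add_eq_zero2 {n : ℕ} (x y : Fin n → ZMod 2) : x + y = 0 ↔ x = y := by
  constructor
  · intro h
    calc x = x + (y + y) := by rw [add_self2, add_zero]
      _ = (x + y) + y := by abel
      _ = y := by rw [h, zero_add]
  · rintro rfl; exact add_self2 x

lemma parseval {n : ℕ} (A : Finset (Fin n → ZMod 2)) :
    ∑ ξ, hat A ξ ^ 2 = 2 ^ n * A.card := by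
  simp only [hat, sq, Finset.sum_mul_sum, ← chi_add]
  rw [Finset.sum_comm]
  simp only [chi_comm _ (_ + _)]
  have : ∀ a ∈ A, ∑ ξ, ∑ b ∈ A, chi (a + b) ξ = 2 ^ n := by
    intro a ha
    rw [Finset.sum_comm]
    simp only [sum_chi, add_eq_zero2]
    simp [ha]
  rw [Finset.sum_congr rfl this]
  simp [mul_comm]

lemma rho_fourier {n : ℕ} (A B : Finset (Fin n → ZMod 2)) (hA : A.Nonempty)
    (y : Fin n → ZMod 2) :
    2 ^ n * A.card * rhoMeas A B y = ∑ ξ, chi ξ y * (hat A ξ * hat B ξ) := by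
  have hN : (A.card : ℝ) ≠ 0 := by exact_mod_cast hA.card_pos.ne'
  have h1 : ∀ ξ, chi ξ y * (hat A ξ * hat B ξ) = ∑ a ∈ A, ∑ b ∈ B, chi (y + a + b) ξ := by
    intro ξ
    unfold hat
    rw [Finset.sum_mul_sum, Finset.mul_sum]
    simp only [Finset.mul_sum]
    refine Finset.sum_congr rfl fun a _ => Finset.sum_congr rfl fun b _ => ?_
    rw [chi_comm _ ξ, chi_add, chi_add]; ring
  simp only [h1]
  rw [Finset.sum_comm]
  have h2 : ∀ a ∈ A, ∑ ξ, ∑ b ∈ B, chi (y + a + b) ξ = if y + a ∈ B then 2 ^ n else 0 := by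
    intro a ha
    rw [Finset.sum_comm]
    simp only [sum_chi, add_eq_zero2]
    simp
  rw [Finset.sum_congr rfl h2, ← Finset.sum_filter, Finset.sum_const, nsmul_eq_mul, rhoMeas]
  field_simp

def uSum {n ℓ : ℕ} (w : Fin ℓ → (Fin n → ZMod 2) × (Fin n → ZMod 2)) : Fin n → ZMod 2 :=
  ∑ i, ((w i).1 + (w i).2)

noncomputable def Om {n : ℕ} (X : Finset (Fin n → ZMod 2)) (ℓ : ℕ) :
    Finset (Fin ℓ → (Fin n → ZMod 2) × (Fin n → ZMod 2)) :=
  Fintype.piFinset fun _ => X ×ˢ X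

lemma Om_card {n : ℕ} (X : Finset (Fin n → ZMod 2)) (ℓ : ℕ) :
    ((Om X ℓ).card : ℝ) = ((X.card : ℝ) ^ 2) ^ ℓ := by
  simp [Om, sq]

lemma Om_chi {n : ℕ} (X : Finset (Fin n → ZMod 2)) (ℓ : ℕ) (ξ : Fin n → ZMod 2) :
    ∑ w ∈ Om X ℓ, chi ξ (uSum w) = (hat X ξ ^ 2) ^ ℓ := by
  unfold uSum Om
  simp only [chi_sum]
  rw [← Finset.prod_univ_sum (fun _ : Fin ℓ => X ×ˢ X) (fun _ p => chi ξ (p.1 + p.2))]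
  rw [Finset.prod_const, Finset.card_univ, Fintype.card_fin]
  congr 1
  rw [Finset.sum_product, hat, sq, Finset.sum_mul_sum]
  simp only [chi_add]

lemma Om_rho {n : ℕ} (A B X : Finset (Fin n → ZMod 2)) (hA : A.Nonempty) (ℓ : ℕ)
    (y : Fin n → ZMod 2) :
    2 ^ n * A.card * ∑ w ∈ Om X ℓ, rhoMeas A B (y + uSum w) =
      ∑ ξ, chi ξ y * (hat A ξ * hat B ξ) * (hat X ξ ^ 2) ^ ℓ := by
  rw [Finset.mul_sum]
  simp only [rho_fourier A B hA]
  rw [Finset.sum_comm]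
  refine Finset.sum_congr rfl fun ξ _ => ?_
  rw [← Om_chi, Finset.mul_sum]
  refine Finset.sum_congr rfl fun w _ => ?_
  rw [chi_add]; ring

lemma fourier_diff {n : ℕ} (A B X : Finset (Fin n → ZMod 2)) (hA : A.Nonempty) (ℓ : ℕ)
    (hℓ : 0 < ℓ) (v : Fin n → ZMod 2)
    (hv : ∀ ξ, (X.card : ℝ) / 2 < |hat X ξ| → chi ξ v = 1) (y : Fin n → ZMod 2) :
    ∑ w ∈ Om X ℓ, rhoMeas A B (y + uSum w) - ∑ w ∈ Om X ℓ, rhoMeas A B (y + v + uSum w) ≤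
      ((2 : ℝ) ^ (-(ℓ : ℤ)) * √((B.card : ℝ) / A.card)) * (Om X ℓ).card := by
  have hN : (0 : ℝ) < A.card := by exact_mod_cast hA.card_pos
  have h2 : (0 : ℝ) < 2 ^ n := by positivity
  set Δ := ∑ w ∈ Om X ℓ, rhoMeas A B (y + uSum w) - ∑ w ∈ Om X ℓ, rhoMeas A B (y + v + uSum w)
    with hΔ
  have e1 : 2 ^ n * A.card * Δ =
      ∑ ξ, chi ξ y * (1 - chi ξ v) * (hat A ξ * hat B ξ) * (hat X ξ ^ 2) ^ ℓ := by
    rw [hΔ, mul_sub, Om_rho A B X hA, Om_rho A B X hA, ← Finset.sum_sub_distrib]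
    refine Finset.sum_congr rfl fun ξ _ => ?_
    rw [chi_add]; ring
  set T : ℝ := (2 : ℝ)⁻¹ ^ ℓ * ((X.card : ℝ) ^ 2) ^ ℓ with hT
  have hT0 : 0 ≤ T := by positivity
  have e2 : ∀ ξ, chi ξ y * (1 - chi ξ v) * (hat A ξ * hat B ξ) * (hat X ξ ^ 2) ^ ℓ
      ≤ T * (|hat A ξ| * |hat B ξ|) := by
    intro ξ
    by_cases hc : (X.card : ℝ) / 2 < |hat X ξ|
    · rw [hv ξ hc]; simp; positivity
    · push Not at hc
      have h3 : hat X ξ ^ 2 ≤ 2⁻¹ * (2⁻¹ * (X.card : ℝ) ^ 2) := by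
        rw [← sq_abs]
        nlinarith [abs_nonneg (hat X ξ)]
      have h4 : (hat X ξ ^ 2) ^ ℓ ≤ 2⁻¹ * T := by
        calc (hat X ξ ^ 2) ^ ℓ ≤ (2⁻¹ * (2⁻¹ * (X.card : ℝ) ^ 2)) ^ ℓ := by gcongr
          _ = (2 : ℝ)⁻¹ ^ ℓ * T := by rw [mul_pow, mul_pow, hT]
          _ ≤ (2 : ℝ)⁻¹ * T := by
            gcongr
            exact pow_le_of_le_one (by norm_num) (by norm_num) hℓ.ne'
      have h5 : chi ξ y * (1 - chi ξ v) * (hat A ξ * hat B ξ) ≤ 2 * (|hat A ξ| * |hat B ξ|) := by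
        refine (le_abs_self _).trans ?_
        rw [abs_mul, abs_mul, abs_mul, chi_abs, one_mul]
        gcongr
        rcases chi_cases ξ v with h | h <;> rw [h] <;> norm_num
      calc _ ≤ 2 * (|hat A ξ| * |hat B ξ|) * (hat X ξ ^ 2) ^ ℓ := by gcongr
        _ ≤ 2 * (|hat A ξ| * |hat B ξ|) * (2⁻¹ * T) := by gcongr
        _ = _ := by ring
  have e3 : ∑ ξ, |hat A ξ| * |hat B ξ| ≤ 2 ^ n * (√A.card * √B.card) := by
    have := Real.sum_mul_le_sqrt_mul_sqrt Finset.univ (fun ξ => |hat A ξ|) (fun ξ => |hat B ξ|)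
    simp only [sq_abs, parseval] at this
    refine this.trans (le_of_eq ?_)
    rw [Real.sqrt_mul h2.le, Real.sqrt_mul h2.le]
    have := Real.mul_self_sqrt h2.le
    linear_combination (√A.card * √B.card) * this
  have e4 : 2 ^ n * A.card * Δ ≤ T * (2 ^ n * (√A.card * √B.card)) := by
    rw [e1]
    refine (Finset.sum_le_sum fun ξ _ => e2 ξ).trans ?_
    rw [← Finset.mul_sum]
    gcongr
  have hs : √A.card * √A.card = (A.card : ℝ) := Real.mul_self_sqrt hN.le
  have hs0 : 0 < √(A.card : ℝ) := Real.sqrt_pos.2 hN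
  have e5 : 2 ^ n * A.card * Δ ≤ 2 ^ n * A.card * (T * √((B.card : ℝ) / A.card)) := by
    refine e4.trans (le_of_eq ?_)
    rw [Real.sqrt_div (by positivity)]
    field_simp
    rw [sq, hs]
    ring
  have e6 := le_of_mul_le_mul_left e5 (by positivity)
  refine e6.trans (le_of_eq ?_)
  rw [Om_card, hT, zpow_neg, zpow_natCast, inv_pow]
  ring

lemma prod_chi_exp {n : ℕ} (b : Finset (Fin n → ZMod 2))
    (hb : LinearIndepOn (ZMod 2) id (b : Set (Fin n → ZMod 2)))
    (p q : ℝ) (c : (Fin n → ZMod 2) → ℝ) :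
    ∑ x, ∏ ξ ∈ b, (c ξ * q * chi ξ x + p) = 2 ^ n * p ^ b.card := by
  simp only [Finset.prod_add]
  rw [Finset.sum_comm, Finset.sum_eq_single_of_mem ∅ (Finset.empty_mem_powerset b)]
  · simp [ZMod.card]
  · intro s hs hne
    rw [Finset.mem_powerset] at hs
    have h1 : ∀ x, ∏ ξ ∈ s, chi ξ x = chi (∑ ξ ∈ s, ξ) x := by
      intro x; rw [chi_comm, chi_sum]; simp only [chi_comm]
    simp only [Finset.prod_mul_distrib, h1, Finset.prod_const]
    rw [← Finset.sum_mul, ← Finset.mul_sum, sum_chi, if_neg]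
    · simp
    · intro h0
      obtain ⟨ξ, hξ⟩ := Finset.nonempty_iff_ne_empty.2 hne
      have := linearIndepOn_finset_iff.1 hb
        (fun ξ => if ξ ∈ s then 1 else 0) (by
          simp only [id, ite_smul, one_smul, zero_smul]
          rw [← Finset.sum_filter, Finset.filter_mem_eq_inter, Finset.inter_eq_right.2 hs, h0])
        ξ (hs hξ)
      simp [hξ] at this

lemma chang_card {n : ℕ} (X : Finset (Fin n → ZMod 2)) (hX : X.Nonempty)
    (b : Finset (Fin n → ZMod 2))
    (hb : LinearIndepOn (ZMod 2) id (b : Set (Fin n → ZMod 2)))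
    (hs : ∀ ξ ∈ b, (X.card : ℝ) / 2 < |hat X ξ|) :
    (b.card : ℝ) ≤ 8 * Real.log (2 ^ n / X.card) := by
  have hN : (0 : ℝ) < X.card := by exact_mod_cast hX.card_pos
  set c : (Fin n → ZMod 2) → ℝ := fun ξ => if 0 ≤ hat X ξ then 1 else -1 with hc
  have hcc : ∀ ξ, c ξ * hat X ξ = |hat X ξ| := by
    intro ξ
    simp only [hc]; split_ifs with h
    · rw [abs_of_nonneg h, one_mul]
    · rw [abs_of_neg (not_le.1 h)]; ring
  have hexp : ∀ ξ x, Real.exp (1 / 2 * (c ξ * chi ξ x))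
      = c ξ * Real.sinh (1 / 2) * chi ξ x + Real.cosh (1 / 2) := by
    intro ξ x
    have h1 := Real.cosh_add_sinh (1 / 2)
    have h2 := Real.cosh_sub_sinh (1 / 2)
    simp only [hc]
    rcases chi_cases ξ x with h | h <;> rw [h] <;> split_ifs <;>
      simp only [one_mul, mul_one, mul_neg, neg_mul, neg_neg] <;> linarith
  set g : (Fin n → ZMod 2) → ℝ := fun x => ∑ ξ ∈ b, 1 / 2 * (c ξ * chi ξ x) with hg
  have e1 : ∑ x, Real.exp (g x) ≤ 2 ^ n * Real.exp (b.card / 8) := by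
    simp only [hg, Real.exp_sum, hexp]
    rw [prod_chi_exp b hb]
    gcongr
    calc Real.cosh (1 / 2) ^ b.card ≤ (Real.exp ((1 / 2) ^ 2 / 2)) ^ b.card := by
          gcongr
          exact Real.cosh_le_exp_half_sq _
      _ = _ := by rw [← Real.exp_nat_mul]; congr 1; ring
  have e2 : X.card * (b.card / 4 : ℝ) ≤ ∑ x ∈ X, g x := by
    simp only [hg]
    rw [Finset.sum_comm]
    have : ∀ ξ ∈ b, (X.card : ℝ) / 4 ≤ ∑ x ∈ X, 1 / 2 * (c ξ * chi ξ x) := by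
      intro ξ hξ
      rw [← Finset.mul_sum, ← Finset.mul_sum]
      have := hs ξ hξ
      rw [← hcc, hat] at this
      linarith
    have := Finset.card_nsmul_le_sum b _ _ this
    rw [nsmul_eq_mul] at this
    linarith
  have e3 : X.card * Real.exp (b.card / 4) ≤ ∑ x ∈ X, Real.exp (g x) := by
    set m : ℝ := b.card / 4
    have : ∀ x ∈ X, Real.exp m * (1 + (g x - m)) ≤ Real.exp (g x) := by
      intro x _
      have h := Real.add_one_le_exp (g x - m)
      calc Real.exp m * (1 + (g x - m)) ≤ Real.exp m * Real.exp (g x - m) := by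
            gcongr; linarith
        _ = _ := by rw [← Real.exp_add]; congr 1; ring
    refine le_trans ?_ (Finset.sum_le_sum this)
    rw [← Finset.mul_sum, Finset.sum_add_distrib, Finset.sum_sub_distrib, Finset.sum_const,
      Finset.sum_const, nsmul_eq_mul, nsmul_eq_mul, mul_comm]
    gcongr
    linarith
  have e4 : ∑ x ∈ X, Real.exp (g x) ≤ ∑ x, Real.exp (g x) :=
    Finset.sum_le_univ_sum_of_nonneg fun x => (Real.exp_pos _).le
  have e5 : X.card * Real.exp (b.card / 4) ≤ 2 ^ n * Real.exp (b.card / 8) :=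
    e3.trans (e4.trans e1)
  have e6 : Real.exp (b.card / 8) ≤ 2 ^ n / X.card := by
    rw [le_div_iff₀ hN]
    have : Real.exp ((b.card : ℝ) / 4) = Real.exp (b.card / 8) * Real.exp (b.card / 8) := by
      rw [← Real.exp_add]; congr 1; ring
    rw [this] at e5
    have hp := Real.exp_pos ((b.card : ℝ) / 8)
    refine le_of_mul_le_mul_right (a := Real.exp ((b.card : ℝ) / 8)) ?_ hp
    linarith
  have e7 := Real.log_le_log (Real.exp_pos _) e6
  rw [Real.log_exp] at e7
  linarith

lemma chang {n : ℕ} (X : Finset (Fin n → ZMod 2)) (hX : X.Nonempty) :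
    ∃ V : Submodule (ZMod 2) (Fin n → ZMod 2),
      (n : ℝ) - Module.finrank (ZMod 2) V ≤ 8 * Real.log (2 ^ n / X.card) ∧
      ∀ v ∈ V, ∀ ξ, (X.card : ℝ) / 2 < |hat X ξ| → chi ξ v = 1 := by
  obtain ⟨b, hbs, hspan, hli⟩ := exists_linearIndependent (ZMod 2)
    {ξ : Fin n → ZMod 2 | (X.card : ℝ) / 2 < |hat X ξ|}
  obtain ⟨b, rfl⟩ : ∃ b' : Finset (Fin n → ZMod 2), b = (b' : Set _) :=
    ⟨b.toFinset, by simp⟩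
  have hcard := chang_card X hX b hli (fun ξ hξ => hbs hξ)
  let L : (Fin n → ZMod 2) →ₗ[ZMod 2] (b → ZMod 2) :=
    Matrix.mulVecLin (Matrix.of fun (ξ : b) => (ξ : Fin n → ZMod 2))
  refine ⟨LinearMap.ker L, ?_, ?_⟩
  · have h1 := LinearMap.finrank_range_add_finrank_ker L
    have h2 : Module.finrank (ZMod 2) (LinearMap.range L) ≤ b.card := by
      have := Submodule.finrank_le (LinearMap.range L)
      simpa using this
    rw [Module.finrank_fin_fun] at h1
    have h3 : (n : ℝ) ≤ b.card + Module.finrank (ZMod 2) (LinearMap.ker L) := by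
      exact_mod_cast (by omega)
    linarith
  · intro v hv ξ hξ
    have hv' : ∀ ζ ∈ b, ζ ⬝ᵥ v = 0 := by
      intro ζ hζ
      have := congrFun (LinearMap.mem_ker.1 hv) ⟨ζ, hζ⟩
      simpa [L, Matrix.mulVec] using this
    have h4 : ξ ∈ Submodule.span (ZMod 2) (b : Set (Fin n → ZMod 2)) := by
      rw [hspan]; exact Submodule.subset_span hξ
    have h5 : ξ ⬝ᵥ v = 0 := by
      clear hξ
      induction h4 using Submodule.span_induction with
      | mem x h => exact hv' x h
      | zero => simp
      | add x y _ _ hx hy => rw [add_dotProduct, hx, hy, add_zero]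
      | smul a x _ hx => rw [smul_dotProduct, hx, smul_zero]
    rw [chi, if_pos h5]

noncomputable def emp {n t : ℕ} (B : Finset (Fin n → ZMod 2)) (a : Fin t → Fin n → ZMod 2)
    (y : Fin n → ZMod 2) : ℝ :=
  ((Finset.univ.filter fun i => y + a i ∈ B).card : ℝ) / t

lemma emp_nonneg {n t : ℕ} (B : Finset (Fin n → ZMod 2)) (a : Fin t → Fin n → ZMod 2)
    (y : Fin n → ZMod 2) : 0 ≤ emp B a y := by unfold emp; positivity

lemma rho_nonneg {n : ℕ} (A B : Finset (Fin n → ZMod 2)) (y : Fin n → ZMod 2) :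
    0 ≤ rhoMeas A B y := by unfold rhoMeas; positivity

lemma rho_le_one {n : ℕ} (A B : Finset (Fin n → ZMod 2)) (y : Fin n → ZMod 2) :
    rhoMeas A B y ≤ 1 := by
  unfold rhoMeas
  apply div_le_one_of_le₀ _ (by positivity)
  exact_mod_cast Finset.card_filter_le _ _

lemma mgf {n t : ℕ} (ht : 0 < t) (A B : Finset (Fin n → ZMod 2)) (hA : A.Nonempty)
    (y : Fin n → ZMod 2) (lam : ℝ) :
    ∑ a ∈ Fintype.piFinset (fun _ : Fin t => A), Real.exp (t * (lam * emp B a y)) ≤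
      (A.card : ℝ) ^ t * Real.exp (t * (rhoMeas A B y * (Real.exp lam - 1))) := by
  have hN : (0 : ℝ) < A.card := by exact_mod_cast hA.card_pos
  have ht' : (t : ℝ) ≠ 0 := by exact_mod_cast ht.ne'
  have h1 : ∀ a : Fin t → Fin n → ZMod 2, Real.exp (t * (lam * emp B a y)) =
      ∏ i, (1 + (if y + a i ∈ B then 1 else 0) * (Real.exp lam - 1)) := by
    intro a
    have : t * (lam * emp B a y) = ∑ i, (if y + a i ∈ B then lam else 0) := by
      rw [← Finset.sum_filter, Finset.sum_const, nsmul_eq_mul, emp]; field_simp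
    rw [this, Real.exp_sum]
    refine Finset.prod_congr rfl fun i _ => ?_
    split_ifs <;> simp
  simp only [h1]
  rw [← Finset.prod_univ_sum (fun _ : Fin t => A)
    (fun _ x => (1 + (if y + x ∈ B then 1 else 0) * (Real.exp lam - 1)))]
  rw [Finset.prod_const, Finset.card_univ, Fintype.card_fin]
  have h2 : ∑ x ∈ A, (1 + (if y + x ∈ B then 1 else 0) * (Real.exp lam - 1))
      = A.card * (1 + rhoMeas A B y * (Real.exp lam - 1)) := by
    rw [Finset.sum_add_distrib, ← Finset.sum_mul, Finset.sum_boole, rhoMeas]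
    simp only [Finset.sum_const, nsmul_eq_mul]
    field_simp
  rw [h2, mul_pow, Real.exp_nat_mul]
  have h3 : 0 ≤ 1 + rhoMeas A B y * (Real.exp lam - 1) := by
    nlinarith [rho_nonneg A B y, rho_le_one A B y,
      mul_nonneg (rho_nonneg A B y) (Real.exp_pos lam).le]
  gcongr
  have := Real.add_one_le_exp (rhoMeas A B y * (Real.exp lam - 1))
  linarith

lemma tail {n t : ℕ} (ht : 0 < t) (A B : Finset (Fin n → ZMod 2)) (hA : A.Nonempty)
    (y : Fin n → ZMod 2) (lam θ δ : ℝ) (P : (Fin t → Fin n → ZMod 2) → Prop)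
    (hP : ∀ a, P a → θ ≤ lam * emp B a y)
    (hδ : rhoMeas A B y * (Real.exp lam - 1) - θ ≤ -δ) :
    (((Fintype.piFinset (fun _ : Fin t => A)).filter P).card : ℝ) ≤
      (A.card : ℝ) ^ t * Real.exp (-(δ * t)) := by
  have h1 : (((Fintype.piFinset (fun _ : Fin t => A)).filter P).card : ℝ) ≤
      ∑ a ∈ Fintype.piFinset (fun _ : Fin t => A),
        Real.exp (t * (lam * emp B a y)) * Real.exp (-(t * θ)) := by
    rw [← Finset.sum_boole]
    apply Finset.sum_le_sum
    intro a _
    rw [← Real.exp_add]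
    split_ifs with h
    · apply Real.one_le_exp
      have := mul_le_mul_of_nonneg_left (hP a h) (Nat.cast_nonneg (α := ℝ) t)
      linarith
    · positivity
  rw [← Finset.sum_mul] at h1
  refine h1.trans ((mul_le_mul_of_nonneg_right (mgf ht A B hA y lam)
    (Real.exp_pos _).le).trans ?_)
  rw [mul_assoc, ← Real.exp_add]
  gcongr
  have := mul_le_mul_of_nonneg_left hδ (Nat.cast_nonneg (α := ℝ) t)
  linarith

def goodAt {n t : ℕ} (A B : Finset (Fin n → ZMod 2)) (ε : ℝ) (a : Fin t → Fin n → ZMod 2)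
    (y : Fin n → ZMod 2) : Prop :=
  rhoMeas A B y - ε * √(rhoMeas A B y) ≤ emp B a y ∧
    emp B a y - ε * √(emp B a y) ≤ rhoMeas A B y

lemma chernoff {n t : ℕ} (ht : 0 < t) (A B : Finset (Fin n → ZMod 2)) (hA : A.Nonempty)
    (ε : ℝ) (hε : 0 < ε) (y : Fin n → ZMod 2) (hy : 0 < rhoMeas A B y) :
    (((Fintype.piFinset (fun _ : Fin t => A)).filter fun a => ¬ goodAt A B ε a y).card : ℝ) ≤
      (A.card : ℝ) ^ t * (2 * Real.exp (-(ε ^ 2 * t) / 4)) := by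
  set p := rhoMeas A B y with hp
  have hsq := Real.mul_self_sqrt hy.le
  have hsp := Real.sqrt_pos.2 hy
  have hlow := tail ht A B hA y (-(ε / √p)) (-(ε / √p) * (p - ε * √p)) (ε ^ 2 / 4)
    (fun a => emp B a y < p - ε * √p)
    (by
      intro a ha
      have : 0 < ε / √p := by positivity
      nlinarith)
    (by
      rw [← hp]
      obtain ⟨x, hx⟩ : ∃ x, x = ε / √p := ⟨_, rfl⟩
      rw [← hx]
      have hx0 : 0 ≤ x := by rw [hx]; positivity
      have hxe : x * √p = ε := by rw [hx]; field_simp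
      have h1 := exp_neg_aux x hx0
      have h2 : x ^ 2 * p = ε ^ 2 := by rw [← hxe]; linear_combination (-x ^ 2) * hsq
      have h3 := mul_le_mul_of_nonneg_left h1 hy.le
      have h4 : x * (ε * √p) = ε ^ 2 := by rw [← hxe]; ring
      nlinarith [sq_nonneg ε])
  obtain ⟨r, hr⟩ : ∃ r, r = (ε + √(ε ^ 2 + 4 * p)) / 2 := ⟨_, rfl⟩
  have hr2 : r ^ 2 = p + ε * r := by
    have := Real.sq_sqrt (show 0 ≤ ε ^ 2 + 4 * p by positivity)
    rw [hr]; linear_combination this / 4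
  have hr0 : 0 < r := by rw [hr]; positivity
  have hrε : ε < r := by nlinarith
  have hup := tail ht A B hA y (ε / r) (ε / r * r ^ 2) (ε ^ 2 / 4)
    (fun a => p < emp B a y - ε * √(emp B a y))
    (by
      intro a ha
      have hx : 0 < ε / r := by positivity
      apply mul_le_mul_of_nonneg_left _ hx.le
      have hz := Real.sqrt_nonneg (emp B a y)
      have hzz := Real.mul_self_sqrt (emp_nonneg B a y)
      have : r < √(emp B a y) := by
        by_contra hcon
        push Not at hcon
        nlinarith [mul_nonneg (sub_nonneg.2 hcon) (sub_nonneg.2 hrε.le),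
          mul_nonneg hz (sub_nonneg.2 hcon)]
      nlinarith)
    (by
      rw [← hp]
      obtain ⟨x, hx⟩ : ∃ x, x = ε / r := ⟨_, rfl⟩
      rw [← hx]
      have hx0 : 0 ≤ x := by rw [hx]; positivity
      have hx1 : x ≤ 1 := by rw [hx, div_le_one hr0]; exact hrε.le
      have hxe : ε = x * r := by rw [hx]; field_simp
      have h1 := exp_aux x hx0 hx1
      have h2 : p = r ^ 2 * (1 - x) := by rw [hxe] at hr2; linear_combination -hr2
      have h3 := mul_le_mul_of_nonneg_left h1 (sq_nonneg r)
      rw [h2, hxe]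
      nlinarith [sq_nonneg (x * r)])
  have hsub : ((Fintype.piFinset (fun _ : Fin t => A)).filter fun a => ¬ goodAt A B ε a y) ⊆
      ((Fintype.piFinset (fun _ : Fin t => A)).filter fun a => emp B a y < p - ε * √p) ∪
      ((Fintype.piFinset (fun _ : Fin t => A)).filter
        fun a => p < emp B a y - ε * √(emp B a y)) := by
    intro a
    simp only [Finset.mem_union, Finset.mem_filter, goodAt, ← hp]
    rintro ⟨h1, h2⟩
    rw [not_and_or, not_le, not_le] at h2
    tauto
  have hcard : (((Fintype.piFinset (fun _ : Fin t => A)).filter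
      fun a => ¬ goodAt A B ε a y).card : ℝ) ≤ _ :=
    Nat.cast_le.2 ((Finset.card_le_card hsub).trans (Finset.card_union_le _ _))
  rw [Nat.cast_add] at hcard
  have : -(ε ^ 2 / 4 * t) = -(ε ^ 2 * t) / 4 := by ring
  rw [this] at hlow hup
  linarith

lemma rho_pos_mem {n : ℕ} (A B : Finset (Fin n → ZMod 2)) (y : Fin n → ZMod 2)
    (h : y ∉ A + B) : ∀ a ∈ A, y + a ∉ B := by
  intro a ha hb
  apply h
  refine Finset.mem_add.2 ⟨a, ha, y + a, hb, ?_⟩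
  calc a + (y + a) = y + (a + a) := by abel
    _ = y := by rw [add_self2, add_zero]

lemma good_of_notMem {n t : ℕ} (A B : Finset (Fin n → ZMod 2)) (ε : ℝ) (y : Fin n → ZMod 2)
    (h : y ∉ A + B) (a : Fin t → Fin n → ZMod 2) (ha : ∀ i, a i ∈ A) : goodAt A B ε a y := by
  have h0 := rho_pos_mem A B y h
  have h1 : rhoMeas A B y = 0 := by
    rw [rhoMeas, Finset.filter_false_of_mem h0]; simp
  have h2 : emp B a y = 0 := by
    rw [emp, Finset.filter_false_of_mem (fun i _ => h0 _ (ha i))]; simp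
  simp [goodAt, h1, h2]

noncomputable def badSet {n t : ℕ} (A B : Finset (Fin n → ZMod 2)) (ε : ℝ)
    (a : Fin t → Fin n → ZMod 2) : Finset (Fin n → ZMod 2) :=
  Finset.univ.filter fun y => ¬ goodAt A B ε a y

lemma sum_bad {n t : ℕ} (ht : 0 < t) (A B : Finset (Fin n → ZMod 2)) (hA : A.Nonempty)
    (ε : ℝ) (hε : 0 < ε) :
    ∑ a ∈ Fintype.piFinset (fun _ : Fin t => A), ((badSet A B ε a).card : ℝ) ≤
      (A + B).card * ((A.card : ℝ) ^ t * (2 * Real.exp (-(ε ^ 2 * t) / 4))) := by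
  have h1 : ∀ a ∈ Fintype.piFinset (fun _ : Fin t => A), ((badSet A B ε a).card : ℝ) ≤
      ∑ y ∈ A + B, if ¬ goodAt A B ε a y then (1 : ℝ) else 0 := by
    intro a ha
    rw [Finset.sum_boole]
    norm_cast
    apply Finset.card_le_card
    intro y hy
    simp only [badSet, Finset.mem_filter, Finset.mem_univ, true_and] at hy ⊢
    refine ⟨?_, hy⟩
    by_contra hc
    exact hy (good_of_notMem A B ε y hc a (Fintype.mem_piFinset.1 ha))
  refine (Finset.sum_le_sum h1).trans ?_
  rw [Finset.sum_comm, ← nsmul_eq_mul]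
  apply Finset.sum_le_card_nsmul
  intro y hy
  rw [Finset.sum_boole]
  apply chernoff ht A B hA ε hε y
  obtain ⟨a, ha, b, hb, rfl⟩ := Finset.mem_add.1 hy
  rw [rhoMeas]
  apply div_pos
  · norm_cast
    rw [Finset.card_pos]
    refine ⟨a, Finset.mem_filter.2 ⟨ha, ?_⟩⟩
    rw [show a + b + a = (a + a) + b by abel, add_self2, zero_add]
    exact hb
  · exact_mod_cast hA.card_pos

lemma exists_X {n t : ℕ} (ht : 0 < t) (α : ℝ) (hα0 : 0 < α) (A B : Finset (Fin n → ZMod 2))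
    (hA : A.Nonempty) (hB : B.Nonempty) (hAα : α * 2 ^ n ≤ (A.card : ℝ))
    (ε : ℝ) (hε : 0 < ε) :
    ∃ (b : Fin t → Fin n → ZMod 2) (X : Finset (Fin n → ZMod 2)),
      α ^ t / 2 * 2 ^ n ≤ (X.card : ℝ) ∧ ∀ x ∈ X,
        ((badSet A B ε (fun i => b i + x)).card : ℝ) ≤
          4 * (A + B).card * Real.exp (-(ε ^ 2 * t) / 4) := by
  have hN : (0 : ℝ) < A.card := by exact_mod_cast hA.card_pos
  have hAB : (0 : ℝ) < (A + B).card := by exact_mod_cast (hA.add hB).card_pos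
  obtain ⟨K, hK⟩ : ∃ K, K = 4 * (A + B).card * Real.exp (-(ε ^ 2 * t) / 4) := ⟨_, rfl⟩
  have hK0 : 0 < K := by rw [hK]; positivity
  rw [← hK]
  set Ω := Fintype.piFinset (fun _ : Fin t => A) with hΩ
  have hΩc : (Ω.card : ℝ) = (A.card : ℝ) ^ t := by simp [hΩ]
  set T := Ω.filter fun a => ((badSet A B ε a).card : ℝ) ≤ K with hT
  have h1 := sum_bad ht A B hA ε hε
  rw [← hΩ] at h1
  have h2 : ((Ω.filter fun a => ¬ ((badSet A B ε a).card : ℝ) ≤ K).card : ℝ) * K ≤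
      ∑ a ∈ Ω, ((badSet A B ε a).card : ℝ) := by
    rw [← Finset.sum_boole, Finset.sum_mul]
    apply Finset.sum_le_sum
    intro a _
    split_ifs with h
    · rw [zero_mul]; positivity
    · rw [one_mul]; exact (not_le.1 h).le
  have h3 : ((Ω.filter fun a => ¬ ((badSet A B ε a).card : ℝ) ≤ K).card : ℝ) ≤
      (A.card : ℝ) ^ t / 2 := by
    have := h2.trans h1
    have h4 : ((A + B).card : ℝ) * ((A.card : ℝ) ^ t * (2 * Real.exp (-(ε ^ 2 * t) / 4)))
      = (A.card : ℝ) ^ t / 2 * K := by rw [hK]; ring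
    rw [h4] at this
    exact le_of_mul_le_mul_right this hK0
  have h5 : (T.card : ℝ) + ((Ω.filter fun a => ¬ ((badSet A B ε a).card : ℝ) ≤ K).card : ℝ) =
      (A.card : ℝ) ^ t := by
    rw [← hΩc]; exact_mod_cast Finset.card_filter_add_card_filter_not _
  have hTc : (α * 2 ^ n) ^ t / 2 ≤ (T.card : ℝ) := by
    have : (α * 2 ^ n) ^ t ≤ (A.card : ℝ) ^ t := by gcongr
    linarith
  have h6 : ∑ b : Fin t → Fin n → ZMod 2, ((Finset.univ.filter
      fun x : Fin n → ZMod 2 => (fun i => b i + x) ∈ T).card : ℝ) = 2 ^ n * T.card := by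
    simp only [← Finset.sum_boole]
    rw [Finset.sum_comm]
    have : ∀ x : Fin n → ZMod 2, ∑ b : Fin t → Fin n → ZMod 2,
        (if (fun i => b i + x) ∈ T then (1 : ℝ) else 0) = T.card := by
      intro x
      have := Equiv.sum_comp (Equiv.addRight (fun _ : Fin t => x))
        (fun b : Fin t → Fin n → ZMod 2 => if b ∈ T then (1 : ℝ) else 0)
      refine this.trans ?_
      simp
    simp only [this, Finset.sum_const, Finset.card_univ, nsmul_eq_mul, cardG]
  have h7 : ∃ b ∈ (Finset.univ : Finset (Fin t → Fin n → ZMod 2)), α ^ t / 2 * 2 ^ n ≤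
      ((Finset.univ.filter fun x : Fin n → ZMod 2 => (fun i => b i + x) ∈ T).card : ℝ) := by
    apply Finset.exists_le_of_sum_le Finset.univ_nonempty
    rw [h6, Finset.sum_const, nsmul_eq_mul, Finset.card_univ]
    have hc : (Fintype.card (Fin t → Fin n → ZMod 2) : ℝ) = (2 ^ n) ^ t := by
      rw [Fintype.card_fun, Nat.cast_pow, cardG, Fintype.card_fin]
    rw [hc]
    have : (0 : ℝ) < 2 ^ n := by positivity
    calc (2 ^ n) ^ t * (α ^ t / 2 * 2 ^ n) = 2 ^ n * ((α * 2 ^ n) ^ t / 2) := by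
          rw [mul_pow]; ring
      _ ≤ _ := by gcongr
  obtain ⟨b, -, hb⟩ := h7
  refine ⟨b, _, hb, ?_⟩
  intro x hx
  simp only [hT, Finset.mem_filter, Finset.mem_univ, true_and] at hx
  exact hx.2

noncomputable def perBad {n : ℕ} (ρ : (Fin n → ZMod 2) → ℝ) (c : ℝ) (u : Fin n → ZMod 2) :
    Finset (Fin n → ZMod 2) :=
  Finset.univ.filter fun y => ρ (y + u) < ρ y - c * √(ρ y)

lemma card_shift {n : ℕ} (E : Finset (Fin n → ZMod 2)) (z : Fin n → ZMod 2) :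
    (Finset.univ.filter fun y => y + z ∈ E).card = E.card := by
  apply Finset.card_bij (fun y _ => y + z)
  · intro y hy; simpa using hy
  · intro a _ b _ h; exact add_right_cancel h
  · intro b hb
    refine ⟨b - z, ?_, by simp⟩
    simpa using hb

lemma perBad_add {n : ℕ} (ρ : (Fin n → ZMod 2) → ℝ) (hρ : ∀ y, 0 ≤ ρ y) (c c' : ℝ)
    (hc : 0 ≤ c) (hc' : 0 ≤ c') (u u' : Fin n → ZMod 2) :
    (perBad ρ (c + c') (u + u')).card ≤ (perBad ρ c u).card + (perBad ρ c' u').card := by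
  rw [← card_shift (perBad ρ c' u') u]
  refine le_trans (Finset.card_le_card ?_) (Finset.card_union_le _ _)
  intro y hy
  simp only [perBad, Finset.mem_union, Finset.mem_filter, Finset.mem_univ, true_and] at hy ⊢
  by_contra hcon
  rw [not_or, not_lt, not_lt] at hcon
  have := chainR _ _ _ c c' (hρ y) (hρ (y + u)) (hρ (y + u + u')) hc hc' hcon.1 hcon.2
  rw [← add_assoc] at hy
  linarith

lemma emp_shift {n t : ℕ} (B : Finset (Fin n → ZMod 2)) (b : Fin t → Fin n → ZMod 2)
    (x y : Fin n → ZMod 2) : emp B (fun i => b i + x) y = emp B b (y + x) := by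
  unfold emp
  simp only [show ∀ i, y + (b i + x) = y + x + b i from fun i => by abel]

lemma perBad_pair {n t : ℕ} (A B : Finset (Fin n → ZMod 2)) (ε : ℝ) (hε : 0 < ε)
    (b : Fin t → Fin n → ZMod 2) (x x' : Fin n → ZMod 2) :
    (perBad (rhoMeas A B) (2 * ε) (x + x')).card ≤
      (badSet A B ε (fun i => b i + x)).card + (badSet A B ε (fun i => b i + x')).card := by
  rw [← card_shift (badSet A B ε (fun i => b i + x')) (x + x')]
  refine le_trans (Finset.card_le_card ?_) (Finset.card_union_le _ _)
  intro y hy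
  simp only [perBad, badSet, Finset.mem_union, Finset.mem_filter, Finset.mem_univ, true_and]
    at hy ⊢
  by_contra hcon
  rw [not_or, not_not, not_not] at hcon
  obtain ⟨⟨h1, -⟩, -, h2⟩ := hcon
  rw [emp_shift] at h1 h2
  rw [show y + (x + x') + x' = y + x + (x' + x') by abel, add_self2, add_zero] at h2
  have := chainR _ _ _ ε ε (rho_nonneg A B y) (emp_nonneg B b (y + x))
    (rho_nonneg A B (y + (x + x'))) hε.le hε.le h1 h2
  rw [two_mul] at hy
  linarith

lemma perBad_sum {n : ℕ} (ρ : (Fin n → ZMod 2) → ℝ) (hρ : ∀ y, 0 ≤ ρ y) (c M : ℝ)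
    (hc : 0 ≤ c) {ι : Type*} (s : Finset ι) (f : ι → Fin n → ZMod 2)
    (h : ∀ i ∈ s, ((perBad ρ c (f i)).card : ℝ) ≤ M) :
    ((perBad ρ (s.card * c) (∑ i ∈ s, f i)).card : ℝ) ≤ s.card * M := by
  induction s using Finset.induction_on with
  | empty => simp [perBad]
  | insert a s ha ih =>
    rw [Finset.sum_insert ha, Finset.card_insert_of_notMem ha]
    have h1 := ih fun i hi => h i (Finset.mem_insert_of_mem hi)
    have h2 := h a (Finset.mem_insert_self _ _)
    have h3 := perBad_add ρ hρ c (s.card * c) hc (by positivity) (f a) (∑ i ∈ s, f i)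
    have h4 : ((perBad ρ (c + s.card * c) (f a + ∑ i ∈ s, f i)).card : ℝ) ≤ _ :=
      Nat.cast_le.2 h3
    rw [Nat.cast_add] at h4
    push_cast
    rw [show ((s.card : ℝ) + 1) * c = c + s.card * c by ring]
    linarith

lemma markov {n : ℕ} {ι : Type*} (Ω : Finset ι) (hΩ : Ω.Nonempty)
    (P : ι → (Fin n → ZMod 2) → Prop) [∀ w y, Decidable (P w y)] (M η : ℝ) (hη : 0 < η)
    (h : ∀ w ∈ Ω, ((Finset.univ.filter fun y => P w y).card : ℝ) ≤ M) :
    ((Finset.univ.filter fun y => ¬ ((Ω.filter fun w => P w y).card : ℝ) ≤ η * Ω.card).card : ℝ)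
      ≤ M / η := by
  have hN : (0 : ℝ) < Ω.card := by exact_mod_cast hΩ.card_pos
  rw [le_div_iff₀ hη]
  refine le_of_mul_le_mul_right (a := (Ω.card : ℝ)) ?_ hN
  have h1 : ((Finset.univ.filter fun y => ¬ ((Ω.filter fun w => P w y).card : ℝ) ≤
      η * Ω.card).card : ℝ) * (η * Ω.card) ≤ ∑ y, ((Ω.filter fun w => P w y).card : ℝ) := by
    rw [← Finset.sum_boole, Finset.sum_mul]
    apply Finset.sum_le_sum
    intro y _
    split_ifs with hh
    · rw [zero_mul]; positivity
    · rw [one_mul]; exact (not_le.1 hh).le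
  have h2 : ∑ y, ((Ω.filter fun w => P w y).card : ℝ) ≤ Ω.card * M := by
    simp only [← Finset.sum_boole]
    rw [Finset.sum_comm, ← nsmul_eq_mul]
    apply Finset.sum_le_card_nsmul
    intro w hw
    rw [Finset.sum_boole]
    exact h w hw
  linarith

theorem refined_almost_periodicity_over_subspace {n : ℕ} (α : ℝ)
    (hα0 : 0 < α) (hα1 : α ≤ 1)
    (A : Finset (Fin n → ZMod 2)) (hA : α * 2 ^ n ≤ (A.card : ℝ))
    (ε : ℝ) (hε : 0 < ε) (t : ℕ) (ht : 0 < t)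
    (B : Finset (Fin n → ZMod 2)) (hB : B.Nonempty) :
    ∃ V : Submodule (ZMod 2) (Fin n → ZMod 2),
      (n : ℝ) - Module.finrank (ZMod 2) V ≤ 32 * Real.logb 2 (2 / α ^ t) ∧
      ∀ v ∈ V, ∀ S : Finset (Fin n → ZMod 2), S.Nonempty →
        ∀ η : ℝ, 0 < η → ∀ ℓ : ℕ, 0 < ℓ →
          1 - 16 * ((ℓ : ℝ) / η) * (((A + B).card : ℝ) / S.card) *
              Real.exp (-(ε ^ 2 * t) / 4) ≤
            prOver S (fun y =>
              rhoMeas A B y - rhoMeas A B (y + v) ≤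
                4 * ε * ℓ * Real.sqrt (rhoMeas A B y) + 2 * η +
                  (2 : ℝ) ^ (-(ℓ : ℤ)) * Real.sqrt ((B.card : ℝ) / A.card)) := by
  have h2n : (0 : ℝ) < 2 ^ n := by positivity
  have hA0 : A.Nonempty := by
    rw [← Finset.card_pos]
    have : (0 : ℝ) < A.card := lt_of_lt_of_le (by positivity) hA
    exact_mod_cast this
  obtain ⟨b, X, hXc, hX⟩ := exists_X ht α hα0 A B hA0 hB hA ε hε
  have hXpos : (0 : ℝ) < X.card := lt_of_lt_of_le (by positivity) hXc
  have hX0 : X.Nonempty := by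
    rw [← Finset.card_pos]; exact_mod_cast hXpos
  obtain ⟨V, hV1, hV2⟩ := chang X hX0
  refine ⟨V, ?_, ?_⟩
  · have h1 : Real.log (2 ^ n / X.card) ≤ Real.log (2 / α ^ t) := by
      apply Real.log_le_log (by positivity)
      rw [div_le_div_iff₀ hXpos (by positivity)]
      linarith
    have hpow : α ^ t ≤ 1 := pow_le_one₀ hα0.le hα1
    have h2 : 0 ≤ Real.log (2 / α ^ t) := by
      apply Real.log_nonneg
      rw [le_div_iff₀ (by positivity)]; linarith
    have h3 : Real.log (2 / α ^ t) ≤ Real.logb 2 (2 / α ^ t) := by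
      rw [Real.logb, le_div_iff₀ (Real.log_pos (by norm_num))]
      have := Real.log_two_lt_d9
      nlinarith
    linarith
  intro v hv S hS η hη ℓ hℓ
  obtain ⟨K, hK⟩ : ∃ K, K = 4 * ((A + B).card : ℝ) * Real.exp (-(ε ^ 2 * t) / 4) := ⟨_, rfl⟩
  rw [← hK] at hX
  have hSpos : (0 : ℝ) < S.card := by exact_mod_cast hS.card_pos
  have hΩ : (Om X ℓ).Nonempty := by
    rw [← Finset.card_pos]
    have : (0 : ℝ) < (Om X ℓ).card := by rw [Om_card]; positivity
    exact_mod_cast this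
  have hchain : ∀ w ∈ Om X ℓ,
      ((perBad (rhoMeas A B) (ℓ * (2 * ε)) (uSum w)).card : ℝ) ≤ ℓ * (2 * K) := by
    intro w hw
    have := perBad_sum (rhoMeas A B) (rho_nonneg A B) (2 * ε) (2 * K) (by positivity)
      (Finset.univ : Finset (Fin ℓ)) (fun i => (w i).1 + (w i).2) (by
        intro i _
        have hwi := Finset.mem_product.1 (Fintype.mem_piFinset.1 hw i)
        have h1 : ((perBad (rhoMeas A B) (2 * ε) ((w i).1 + (w i).2)).card : ℝ) ≤ _ :=
          Nat.cast_le.2 (perBad_pair A B ε hε b (w i).1 (w i).2)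
        rw [Nat.cast_add] at h1
        linarith [hX _ hwi.1, hX _ hwi.2])
    simpa [uSum] using this
  have hm1 := markov (Om X ℓ) hΩ
    (fun w y => y ∈ perBad (rhoMeas A B) (ℓ * (2 * ε)) (uSum w)) (ℓ * (2 * K)) η hη (by
      intro w hw
      simpa using hchain w hw)
  have hm2 := markov (Om X ℓ) hΩ
    (fun w y => y + (v + uSum w) ∈ perBad (rhoMeas A B) (ℓ * (2 * ε)) (uSum w))
    (ℓ * (2 * K)) η hη (by
      intro w hw
      rw [card_shift]
      exact hchain w hw)
  have hkey : ∀ y,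
      (((Om X ℓ).filter fun w => y ∈ perBad (rhoMeas A B) (ℓ * (2 * ε)) (uSum w)).card : ℝ)
        ≤ η * (Om X ℓ).card →
      (((Om X ℓ).filter fun w => y + (v + uSum w) ∈
        perBad (rhoMeas A B) (ℓ * (2 * ε)) (uSum w)).card : ℝ) ≤ η * (Om X ℓ).card →
      rhoMeas A B y - rhoMeas A B (y + v) ≤
                4 * ε * ℓ * Real.sqrt (rhoMeas A B y) + 2 * η +
                  (2 : ℝ) ^ (-(ℓ : ℤ)) * Real.sqrt ((B.card : ℝ) / A.card) := by
    intro y h1 h2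
    have := finalR (Om X ℓ) hΩ (fun w => rhoMeas A B (y + uSum w))
      (fun w => rhoMeas A B (y + v + uSum w)) (rhoMeas A B y) (rhoMeas A B (y + v))
      (ℓ * (2 * ε)) η ((2 : ℝ) ^ (-(ℓ : ℤ)) * Real.sqrt ((B.card : ℝ) / A.card))
      (fun _ => rho_nonneg _ _ _) (fun _ => rho_nonneg _ _ _) (fun _ => rho_le_one _ _ _)
      (rho_nonneg _ _ _) (rho_le_one _ _ _) (rho_nonneg _ _ _) (by positivity) hη.le
      (by positivity)
      (by simpa [perBad] using h1)
      (by
        simp only [perBad, Finset.mem_filter, Finset.mem_univ, true_and] at h2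
        have e : ∀ w : Fin ℓ → (Fin n → ZMod 2) × (Fin n → ZMod 2),
            y + (v + uSum w) + uSum w = y + v := by
          intro w
          rw [show y + (v + uSum w) + uSum w = y + v + (uSum w + uSum w) by abel, add_self2,
            add_zero]
        simp only [e] at h2
        simp only [← add_assoc] at h2
        exact h2)
      (fourier_diff A B X hA0 ℓ hℓ v (hV2 v hv) y)
    linarith
  set Good := fun y => rhoMeas A B y - rhoMeas A B (y + v) ≤
                4 * ε * ℓ * Real.sqrt (rhoMeas A B y) + 2 * η +
                  (2 : ℝ) ^ (-(ℓ : ℤ)) * Real.sqrt ((B.card : ℝ) / A.card) with hGood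
  have hbad : ((S.filter fun y => ¬ Good y).card : ℝ) ≤ 2 * (ℓ * (2 * K) / η) := by
    have hsub : (S.filter fun y => ¬ Good y) ⊆
      (Finset.univ.filter fun y => ¬ (((Om X ℓ).filter fun w =>
        y ∈ perBad (rhoMeas A B) (ℓ * (2 * ε)) (uSum w)).card : ℝ) ≤ η * (Om X ℓ).card) ∪
      (Finset.univ.filter fun y => ¬ (((Om X ℓ).filter fun w => y + (v + uSum w) ∈
        perBad (rhoMeas A B) (ℓ * (2 * ε)) (uSum w)).card : ℝ) ≤ η * (Om X ℓ).card) := by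
      intro y hy
      rw [Finset.mem_filter] at hy
      rw [Finset.mem_union, Finset.mem_filter, Finset.mem_filter]
      by_contra hcon
      apply hy.2
      apply hkey y
      · by_contra hh; exact hcon (Or.inl ⟨Finset.mem_univ _, hh⟩)
      · by_contra hh; exact hcon (Or.inr ⟨Finset.mem_univ _, hh⟩)
    have h1 : ((S.filter fun y => ¬ Good y).card : ℝ) ≤ _ :=
      Nat.cast_le.2 ((Finset.card_le_card hsub).trans (Finset.card_union_le _ _))
    rw [Nat.cast_add] at h1
    linarith
  have hsplit : ((S.filter fun y => Good y).card : ℝ) + ((S.filter fun y => ¬ Good y).card : ℝ)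
      = S.card := by
    exact_mod_cast Finset.card_filter_add_card_filter_not _
  rw [prOver, le_div_iff₀ hSpos]
  have hfin : (1 - 16 * ((ℓ : ℝ) / η) * (((A + B).card : ℝ) / S.card) *
      Real.exp (-(ε ^ 2 * t) / 4)) * S.card = S.card - 2 * (ℓ * (2 * K) / η) := by
    rw [hK]; field_simp; ring
  rw [hfin]
  linarith
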